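/- Fix d ∈ {7,11} and let H^(d) = Γ^(d) ∩ Γ_s^(d). Set g₁' = [[0,0,i/√d],[0,1,0],[i√d,0,0]], and for each integer k with 1 ≤ k ≤ (d−1)/2 set g'_{2k} = [[1,0,ik/√d],[0,1,0],[0,0,1]] and g'_{2k+1} = [[1,0,−ik/√d],[0,1,0],[0,0,1]]. Then Γ_s^(d) is the disjoint union of the d+1 left cosets H^(d), g₁'H^(d), and g'_mH^(d) for m = 2,…,d; in particular these cosets are pairwise disjoint and their union is all of Γ_s^(d). -/

import Mathlib

noncomputable section

open Matrix

/-- The Hermitian form matrix `J`. -/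
def matJ : Matrix (Fin 3) (Fin 3) ℂ := !![0,0,1; 0,1,0; 1,0,0]

/-- Membership in `U(2,1;J)`. -/
def inU21 (M : Matrix (Fin 3) (Fin 3) ℂ) : Prop := IsUnit M ∧ Mᴴ * matJ * M = matJ

/-- `i√d`. -/
def isqd (d : ℕ) : ℂ := Complex.I * (Real.sqrt d : ℂ)

/-- `ω_d = (1 + i√d)/2`. -/
def ωd (d : ℕ) : ℂ := (1 + Complex.I * (Real.sqrt d : ℂ)) / 2

/-- Membership in the ring of integers `O_d = ℤ + ℤ·ω_d` (for `d ≡ 3 mod 4`). -/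
def inOd (d : ℕ) (z : ℂ) : Prop := ∃ a b : ℤ, z = (a : ℂ) + (b : ℂ) * ωd d

/-- The Picard modular group `Γ^(d)` (as a set of matrices). -/
def GammaPd (d : ℕ) : Set (Matrix (Fin 3) (Fin 3) ℂ) :=
  {M | inU21 M ∧ ∀ j k : Fin 3, inOd d (M j k)}

/-- The sister group `Γ_s^(d)` (as a set of matrices). -/
def GammaSd (d : ℕ) : Set (Matrix (Fin 3) (Fin 3) ℂ) :=
  {M | inU21 M ∧ inOd d (M 0 0) ∧ inOd d (M 0 1) ∧ inOd d (M 1 1) ∧ inOd d (M 1 2) ∧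
    inOd d (M 2 2) ∧ inOd d (isqd d * M 0 2) ∧ inOd d (M 1 0 / isqd d) ∧
    inOd d (M 2 0 / isqd d) ∧ inOd d (M 2 1 / isqd d)}

/-- `H^(d) = Γ^(d) ∩ Γ_s^(d)`. -/
def Hd (d : ℕ) : Set (Matrix (Fin 3) (Fin 3) ℂ) := GammaPd d ∩ GammaSd d

/-- The coset representatives `g'_m` for `Γ_s^(d)`: `g'₀ = 1`, `g'₁`, and for
`1 ≤ k ≤ (d-1)/2` the matrices `g'_{2k}` and `g'_{2k+1}`. -/
def gmat' (d m : ℕ) : Matrix (Fin 3) (Fin 3) ℂ :=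
  if m = 0 then 1
  else if m = 1 then
    !![0, 0, Complex.I / (Real.sqrt d : ℂ); 0, 1, 0; Complex.I * (Real.sqrt d : ℂ), 0, 0]
  else if m % 2 = 0 then
    !![1, 0, Complex.I * ((m / 2 : ℕ) : ℂ) / (Real.sqrt d : ℂ); 0, 1, 0; 0, 0, 1]
  else
    !![1, 0, -(Complex.I * ((m / 2 : ℕ) : ℂ) / (Real.sqrt d : ℂ)); 0, 1, 0; 0, 0, 1]

/-!
Reduction modulo `i√d` maps `O_d` onto the field `𝔽_d`. For `M ∈ Γ_s`, the numbers `i√d·M₁₃` and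
`M₃₃` lie in `O_d` and do not both vanish modulo `i√d`, because all three terms of the `(1,3)` entry
of `Mᴴ J M = J` would otherwise be divisible by `i√d`, while that entry is `1`. Hence `M` determines
a point of the projective line `ℙ¹(𝔽_d)`. For `g ∈ Γ_s`, `M` lies in `g H` if and only if the
Hermitian product of the last columns of `g` and `M` is in `O_d`. For `g = g'_m` this says that a
linear form on `𝔽_d²` vanishes at `(i√d·M₁₃, M₃₃)`, and the `d + 1` linear forms so obtained cut out
each of the `d + 1` points of `ℙ¹(𝔽_d)` exactly once.
-/

section IntegerRing

variable {d : ℕ}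

lemma isqd_mul_self (d : ℕ) : isqd d * isqd d = -d := by
  have sqrt_mul_self : (Real.sqrt d : ℂ) * Real.sqrt d = d := by
    exact_mod_cast Real.mul_self_sqrt d.cast_nonneg
  rw [isqd, mul_mul_mul_comm, Complex.I_mul_I, sqrt_mul_self, neg_one_mul]

lemma isqd_ne_zero (d : ℕ) [NeZero d] : isqd d ≠ 0 :=
  mul_self_ne_zero.mp (by simpa [isqd_mul_self] using NeZero.ne d)

lemma star_isqd (d : ℕ) : star (isqd d) = -isqd d := by
  simp [isqd]

lemma isqd_eq_two_mul_ωd_sub_one (d : ℕ) : isqd d = 2 * ωd d - 1 := by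
  rw [isqd, ωd]; ring

lemma ωd_mul_self (d : ℕ) : ωd d * ωd d = ωd d - (d + 1) / 4 := by
  have h := isqd_mul_self d
  rw [isqd_eq_two_mul_ωd_sub_one] at h
  linear_combination h / 4

lemma star_ωd (d : ℕ) : star (ωd d) = 1 - ωd d := by
  simp only [ωd, Complex.star_def, map_div₀, map_add, map_mul, map_one, Complex.conj_I,
    Complex.conj_ofReal, Complex.conj_ofNat]
  ring

lemma add_mul_ωd_mul_add_mul_ωd {q : ℕ} (hq : d + 1 = 4 * q) (a b a' b' : ℤ) :
    ((a + b * ωd d) * (a' + b' * ωd d) : ℂ)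
      = (a * a' - b * b' * q : ℤ) + (a * b' + b * a' + b * b' : ℤ) * ωd d := by
  have hqℂ : (d : ℂ) + 1 = 4 * q := by exact_mod_cast hq
  push_cast
  linear_combination (b : ℂ) * b' * (ωd_mul_self d - hqℂ / 4)

/-- The ring of integers `O_d` as a subring of `ℂ`. The congruence on `d` is a `Fact` because the
set `ℤ + ℤ·ω_d` is closed under multiplication only when `d ≡ 3 mod 4`. -/
def integerRing (d : ℕ) [Fact (d % 4 = 3)] : Subring ℂ where
  carrier := {z | inOd d z}
  mul_mem' := by
    rintro _ _ ⟨a, b, rfl⟩ ⟨a', b', rfl⟩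
    obtain ⟨q, hq⟩ : 4 ∣ d + 1 := by have : d % 4 = 3 := Fact.out; omega
    exact ⟨_, _, add_mul_ωd_mul_add_mul_ωd hq a b a' b'⟩
  one_mem' := ⟨1, 0, by simp⟩
  add_mem' := by
    rintro _ _ ⟨a, b, rfl⟩ ⟨a', b', rfl⟩
    exact ⟨a + a', b + b', by push_cast; ring⟩
  zero_mem' := ⟨0, 0, by simp⟩
  neg_mem' := by
    rintro _ ⟨a, b, rfl⟩
    exact ⟨-a, -b, by push_cast; ring⟩

variable [Fact (d % 4 = 3)]

lemma mem_integerRing {z : ℂ} : z ∈ integerRing d ↔ inOd d z := Iff.rfl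

instance neZero_of_fact_mod_four : NeZero d where
  out := by
    have hd : d % 4 = 3 := Fact.out
    omega

lemma isqd_mem_integerRing : isqd d ∈ integerRing d :=
  ⟨-1, 2, by rw [isqd_eq_two_mul_ωd_sub_one]; push_cast; ring⟩

lemma star_mem_integerRing {z : ℂ} (hz : z ∈ integerRing d) : star z ∈ integerRing d := by
  obtain ⟨a, b, rfl⟩ := hz
  refine ⟨a + b, -b, ?_⟩
  simp only [star_add, star_mul', star_ωd, star_intCast]
  push_cast
  ring

lemma star_div_isqd_zpow_mem_integerRing {z : ℂ} {n : ℤ}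
    (hz : z / isqd d ^ n ∈ integerRing d) : star z / isqd d ^ n ∈ integerRing d := by
  have hstar := star_mem_integerRing hz
  rw [star_div₀, star_zpow₀, star_isqd] at hstar
  obtain hn | hn := n.even_or_odd
  · rwa [hn.neg_zpow] at hstar
  · rw [hn.neg_zpow, div_neg] at hstar
    exact neg_mem_iff.mp hstar

end IntegerRing

section Residue

variable {d : ℕ}

/-- The reduction map `O_d → O_d / (i√d) = ℤ/d`, extended to a function on `ℂ`. It sends `z` to half
of its trace `2 Re z`, since `ω_d` is congruent to its conjugate modulo `i√d`. Only its values on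
`O_d`, where the trace is an integer, are meaningful. -/
def residue (d : ℕ) (z : ℂ) : ZMod d := ⌊2 * z.re⌋ * 2⁻¹

lemma residue_add_mul_ωd (a b : ℤ) :
    residue d (a + b * ωd d) = (2 * a + b : ℤ) * 2⁻¹ := by
  have re_ωd : (ωd d).re = 1 / 2 := by simp [ωd]
  have trace : 2 * ((a : ℂ) + b * ωd d).re = (2 * a + b : ℤ) := by
    simp only [Complex.add_re, Complex.mul_re, Complex.intCast_re, Complex.intCast_im, re_ωd]
    push_cast
    ring
  rw [residue, trace, Int.floor_intCast]

lemma residue_isqd : residue d (isqd d) = 0 := by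
  simp [residue, isqd]

variable [Fact (d % 4 = 3)]

variable (d) in
lemma two_mul_inv_two_zmod : (2 : ZMod d) * 2⁻¹ = 1 := by
  have hd : d % 4 = 3 := Fact.out
  exact ZMod.coe_mul_inv_eq_one 2 (Nat.coprime_two_left.mpr (Nat.odd_iff.mpr (by omega)))

lemma residue_intCast (n : ℤ) : residue d n = n := by
  have h := residue_add_mul_ωd (d := d) n 0
  simp only [Int.cast_zero, zero_mul, add_zero] at h
  rw [h]
  push_cast
  linear_combination (n : ZMod d) * two_mul_inv_two_zmod d

lemma residue_add {x y : ℂ} (hx : x ∈ integerRing d) (hy : y ∈ integerRing d) :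
    residue d (x + y) = residue d x + residue d y := by
  obtain ⟨a, b, rfl⟩ := hx
  obtain ⟨a', b', rfl⟩ := hy
  have hsum : (a + b * ωd d + (a' + b' * ωd d) : ℂ)
      = (a + a' : ℤ) + (b + b' : ℤ) * ωd d := by
    push_cast; ring
  simp only [hsum, residue_add_mul_ωd]
  push_cast
  ring

lemma residue_mul {x y : ℂ} (hx : x ∈ integerRing d) (hy : y ∈ integerRing d) :
    residue d (x * y) = residue d x * residue d y := by
  obtain ⟨a, b, rfl⟩ := hx
  obtain ⟨a', b', rfl⟩ := hy
  obtain ⟨q, hq⟩ : 4 ∣ d + 1 := by have : d % 4 = 3 := Fact.out; omega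
  have hqd : (1 : ZMod d) = 4 * q := by simpa using congrArg (Nat.cast : ℕ → ZMod d) hq
  simp only [add_mul_ωd_mul_add_mul_ωd hq, residue_add_mul_ωd]
  push_cast
  have h2 := two_mul_inv_two_zmod d
  generalize (2 : ZMod d)⁻¹ = t at h2 ⊢
  have hqt : (q : ZMod d) = t * t := by
    linear_combination -(q * (2 * t + 1)) * h2 - t * t * hqd
  rw [hqt]
  linear_combination -t * (2 * a * a' + a * b' + b * a' + b * b' * (t + 1)) * h2

lemma residue_eq_zero_iff {z : ℂ} (hz : z ∈ integerRing d) :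
    residue d z = 0 ↔ z / isqd d ∈ integerRing d := by
  have hs := isqd_ne_zero d
  constructor
  · obtain ⟨a, b, rfl⟩ := hz
    intro h
    obtain ⟨k, hk⟩ : (d : ℤ) ∣ 2 * a + b := by
      rw [← ZMod.intCast_zmod_eq_zero_iff_dvd]
      rw [residue_add_mul_ωd] at h
      linear_combination 2 * h - (2 * a + b : ℤ) * two_mul_inv_two_zmod d
    obtain ⟨q, hq⟩ : 4 ∣ d + 1 := by have : d % 4 = 3 := Fact.out; omega
    have hq' : (d : ℂ) + 1 = 4 * q := by exact_mod_cast hq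
    have hk' : 2 * (a : ℂ) + b = d * k := by exact_mod_cast hk
    refine ⟨2 * q * k - a, -k, ?_⟩
    rw [div_eq_iff hs, isqd_eq_two_mul_ωd_sub_one]
    push_cast
    linear_combination ωd d * hk' + (ωd d * k - k / 2) * hq' + 2 * k * ωd_mul_self d
  · intro h
    rw [← mul_div_cancel₀ z hs, residue_mul isqd_mem_integerRing h, residue_isqd, zero_mul]

end Residue

section Groups

variable {d : ℕ} {G M N : Matrix (Fin 3) (Fin 3) ℂ}

lemma matJ_mul_self : matJ * matJ = 1 := by
  simp [matJ, one_fin_three]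

lemma conjTranspose_matJ : matJᴴ = matJ := by
  ext i j
  fin_cases i <;> fin_cases j <;> simp [matJ]

lemma matJ_mul_apply (M : Matrix (Fin 3) (Fin 3) ℂ) (i j : Fin 3) :
    (matJ * M) i j = M i.rev j := by
  fin_cases i <;> simp [matJ, mul_apply, Fin.sum_univ_three]

lemma mul_matJ_apply (M : Matrix (Fin 3) (Fin 3) ℂ) (i j : Fin 3) :
    (M * matJ) i j = M i j.rev := by
  fin_cases j <;> simp [matJ, mul_apply, Fin.sum_univ_three]

lemma conjTranspose_mul_matJ_mul_apply (G M : Matrix (Fin 3) (Fin 3) ℂ) (i j : Fin 3) :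
    (Gᴴ * matJ * M) i j = star (G 2 i) * M 0 j + star (G 1 i) * M 1 j + star (G 0 i) * M 2 j := by
  rw [Matrix.mul_apply, Fin.sum_univ_three]
  simp only [mul_matJ_apply, conjTranspose_apply]
  rfl

lemma adjoint_mul_eq_one (hM : Mᴴ * matJ * M = matJ) : matJ * Mᴴ * matJ * M = 1 := by
  rw [mul_assoc, mul_assoc, ← mul_assoc Mᴴ, hM, matJ_mul_self]

lemma inU21_iff : inU21 M ↔ Mᴴ * matJ * M = matJ :=
  ⟨And.right, fun hM => ⟨.of_mul_eq_one_right _ (adjoint_mul_eq_one hM), hM⟩⟩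

lemma inU21.mul (hM : inU21 M) (hN : inU21 N) : inU21 (M * N) := by
  rw [inU21_iff, conjTranspose_mul]
  calc Nᴴ * Mᴴ * matJ * (M * N) = Nᴴ * (Mᴴ * matJ * M) * N := by simp only [mul_assoc]
    _ = matJ := by rw [hM.2, hN.2]

lemma inU21.adjoint (hM : inU21 M) : inU21 (matJ * Mᴴ * matJ) := by
  rw [inU21_iff]
  calc (matJ * Mᴴ * matJ)ᴴ * matJ * (matJ * Mᴴ * matJ)
      = matJ * M * (matJ * matJ) * (matJ * Mᴴ * matJ) := by
        simp only [conjTranspose_mul, conjTranspose_conjTranspose, conjTranspose_matJ, mul_assoc]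
    _ = matJ * (M * (matJ * Mᴴ * matJ)) := by rw [matJ_mul_self, mul_one, mul_assoc]
    _ = matJ := by rw [mul_eq_one_comm.mp (adjoint_mul_eq_one hM.2), mul_one]

/-- The exponents `e` such that the entry `M i j` of an element of `Γ_s` ranges over the fractional
ideal `(i√d)^e O_d`. -/
def sisterWeight : Matrix (Fin 3) (Fin 3) ℤ := !![0, 0, -1; 1, 0, 0; 1, 1, 0]

lemma sisterWeight_le_add (i j k : Fin 3) :
    sisterWeight i k ≤ sisterWeight i j + sisterWeight j k := by
  revert i j k; decide

lemma sisterWeight_rev_rev (i j : Fin 3) : sisterWeight j.rev i.rev = sisterWeight i j := by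
  fin_cases i <;> fin_cases j <;> rfl

variable [Fact (d % 4 = 3)]

lemma mem_gammaSd_iff :
    M ∈ GammaSd d ↔ inU21 M ∧ ∀ i j, M i j / isqd d ^ sisterWeight i j ∈ integerRing d := by
  simp only [GammaSd, Set.mem_ofPred_eq, mem_integerRing, Fin.forall_fin_succ, sisterWeight,
    of_apply, cons_val', cons_val_fin_one, cons_val_zero, cons_val_succ, Fin.succ_zero_eq_one,
    Fin.succ_one_eq_two, IsEmpty.forall_iff, and_true, zpow_ofNat, pow_zero, div_one,
    _root_.zpow_neg, pow_one, div_inv_eq_mul, mul_comm (isqd d)]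
  tauto

lemma mem_Hd_iff : M ∈ Hd d ↔ M ∈ GammaSd d ∧ M 0 2 ∈ integerRing d := by
  refine ⟨fun h => ⟨h.2, h.1.2 0 2⟩, fun ⟨hM, h02⟩ => ⟨⟨hM.1, fun i j => ?_⟩, hM⟩⟩
  obtain ⟨rfl, rfl⟩ | hw : (i = 0 ∧ j = 2) ∨ 0 ≤ sisterWeight i j := by
    fin_cases i <;> fin_cases j <;> simp [sisterWeight]
  · exact h02
  · obtain ⟨n, hn⟩ := Int.eq_ofNat_of_zero_le hw
    have hij := (mem_gammaSd_iff.mp hM).2 i j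
    rw [hn, zpow_natCast] at hij
    have hs : isqd d ^ n ≠ 0 := pow_ne_zero n (isqd_ne_zero d)
    rw [← div_mul_cancel₀ (M i j) hs]
    exact mul_mem hij (pow_mem isqd_mem_integerRing n)

lemma mul_mem_gammaSd (hM : M ∈ GammaSd d) (hN : N ∈ GammaSd d) : M * N ∈ GammaSd d := by
  rw [mem_gammaSd_iff] at *
  refine ⟨hM.1.mul hN.1, fun i k => ?_⟩
  rw [mul_apply, Finset.sum_div]
  refine sum_mem fun j _ => ?_
  obtain ⟨n, hn⟩ := Int.eq_ofNat_of_zero_le (sub_nonneg.mpr (sisterWeight_le_add i j k))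
  have hterm : M i j * N j k / isqd d ^ sisterWeight i k
      = M i j / isqd d ^ sisterWeight i j * (N j k / isqd d ^ sisterWeight j k) * isqd d ^ n := by
    have hs := isqd_ne_zero d
    rw [← zpow_natCast, ← hn, zpow_sub₀ hs, zpow_add₀ hs]
    field_simp
  rw [hterm]
  exact mul_mem (mul_mem (hM.2 i j) (hN.2 j k)) (pow_mem isqd_mem_integerRing n)

lemma adjoint_mem_gammaSd (hM : M ∈ GammaSd d) : matJ * Mᴴ * matJ ∈ GammaSd d := by
  rw [mem_gammaSd_iff] at *
  refine ⟨hM.1.adjoint, fun i j => ?_⟩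
  rw [mul_matJ_apply, matJ_mul_apply, conjTranspose_apply, ← sisterWeight_rev_rev]
  exact star_div_isqd_zpow_mem_integerRing (hM.2 _ _)

lemma mem_image_mul_Hd_iff (hG : G ∈ GammaSd d) :
    M ∈ (G * ·) '' Hd d ↔ M ∈ GammaSd d ∧ (Gᴴ * matJ * M) 2 2 ∈ integerRing d := by
  constructor
  · rintro ⟨N, hN, rfl⟩
    rw [mem_Hd_iff] at hN
    refine ⟨mul_mem_gammaSd hG hN.1, ?_⟩
    have entry : (Gᴴ * matJ * (G * N)) 2 2 = N 0 2 := by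
      rw [← mul_assoc, hG.1.2, matJ_mul_apply]
      rfl
    rw [entry]
    exact hN.2
  · rintro ⟨hM, h⟩
    refine ⟨matJ * Gᴴ * matJ * M, ?_, ?_⟩
    · have entry : (matJ * Gᴴ * matJ * M) 0 2 = (Gᴴ * matJ * M) 2 2 := by
        simp only [mul_assoc, matJ_mul_apply _ 0]
        rfl
      rw [mem_Hd_iff, entry]
      exact ⟨mul_mem_gammaSd (adjoint_mem_gammaSd hG) hM, h⟩
    · change G * (matJ * Gᴴ * matJ * M) = M
      rw [← mul_assoc, mul_eq_one_comm.mp (adjoint_mul_eq_one hG.1.2), one_mul]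

end Groups

section Cosets

variable {d : ℕ} {M : Matrix (Fin 3) (Fin 3) ℂ}

/-- The integer `n` such that the upper right entry of `g'_m` is `-n / i√d`, for `m ≠ 1`. -/
def shift (m : ℕ) : ℤ := (-1) ^ m * (m / 2 : ℕ)

lemma shift_two_mul (k : ℕ) : shift (2 * k) = k := by
  simp [shift]

lemma shift_two_mul_add_one (k : ℕ) : shift (2 * k + 1) = -k := by
  have hk : (2 * k + 1) / 2 = k := by omega
  simp [shift, pow_succ, hk]

lemma exists_shift_eq [NeZero d] (x : ZMod d) :
    ∃ m < d + 1, m ≠ 1 ∧ (shift m : ZMod d) = x := by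
  have hmem := x.valMinAbs_mem_Ioc
  rw [Set.mem_Ioc] at hmem
  obtain ⟨k, hk | hk⟩ := x.valMinAbs.eq_nat_or_neg
  · refine ⟨2 * k, by omega, by omega, ?_⟩
    rw [shift_two_mul, ← hk, ZMod.coe_valMinAbs]
  · obtain rfl | hk0 := k.eq_zero_or_pos
    · refine ⟨0, by omega, by omega, ?_⟩
      rw [← x.coe_valMinAbs, hk]
      simp [shift]
    · refine ⟨2 * k + 1, by omega, by omega, ?_⟩
      rw [shift_two_mul_add_one, ← hk, ZMod.coe_valMinAbs]

lemma eq_of_shift_eq (hd : Odd d) {m n : ℕ} (hm : m < d + 1) (hn : n < d + 1) (hm1 : m ≠ 1)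
    (hn1 : n ≠ 1) (h : (shift m : ZMod d) = shift n) : m = n := by
  rw [ZMod.intCast_eq_intCast_iff_dvd_sub] at h
  have hlt : |shift n - shift m| < d := by
    obtain ⟨e, rfl⟩ := hd
    obtain ⟨k, rfl | rfl⟩ := m.even_or_odd' <;> obtain ⟨l, rfl | rfl⟩ := n.even_or_odd' <;>
      simp only [shift_two_mul, shift_two_mul_add_one, abs_lt] <;> omega
  have heq := Int.eq_zero_of_abs_lt_dvd h hlt
  obtain ⟨k, rfl | rfl⟩ := m.even_or_odd' <;> obtain ⟨l, rfl | rfl⟩ := n.even_or_odd' <;>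
    simp only [shift_two_mul, shift_two_mul_add_one] at heq <;> omega

/-- The linear form on `𝔽_d²` that vanishes at the reductions of `(i√d·M₁₃, M₃₃)` for the matrices
`M` in the coset `g'_m H`. -/
def cosetForm (d m : ℕ) (x y : ZMod d) : ZMod d := if m = 1 then y else x + shift m * y

lemma existsUnique_cosetForm_eq_zero [Fact d.Prime] (hd : Odd d) {x y : ZMod d}
    (hxy : ¬(x = 0 ∧ y = 0)) : ∃! m, m < d + 1 ∧ cosetForm d m x y = 0 := by
  have d_pos : 0 < d := (Fact.out : d.Prime).pos
  by_cases hy : y = 0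
  · have hx : x ≠ 0 := fun hx => hxy ⟨hx, hy⟩
    refine ⟨1, ⟨by omega, by simp [cosetForm, hy]⟩, fun m hm => ?_⟩
    by_contra hm1
    exact hx (by simpa [cosetForm, hm1, hy] using hm.2)
  · have zero_iff (m : ℕ) : cosetForm d m x y = 0 ↔ m ≠ 1 ∧ (shift m : ZMod d) = -x / y := by
      rw [cosetForm, eq_div_iff hy, eq_neg_iff_add_eq_zero, add_comm]
      split_ifs with hm <;> simp [hm, hy]
    simp only [zero_iff]
    obtain ⟨m, hm, hm1, hmx⟩ := exists_shift_eq (-x / y)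
    exact ⟨m, ⟨hm, hm1, hmx⟩, fun n ⟨hn, hn1, hnx⟩ =>
      eq_of_shift_eq hd hn hm hn1 hm1 (hnx.trans hmx.symm)⟩

lemma I_div_sqrt (d : ℕ) : Complex.I / (Real.sqrt d : ℂ) = -1 / isqd d := by
  rw [isqd, ← div_div, neg_div, one_div, Complex.inv_I, neg_neg]

lemma gmat'_one (d : ℕ) : gmat' d 1 = !![0, 0, -1 / isqd d; 0, 1, 0; isqd d, 0, 0] := by
  rw [← I_div_sqrt]
  rfl

lemma gmat'_of_ne_one {m : ℕ} (hm : m ≠ 1) :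
    gmat' d m = !![1, 0, -(shift m : ℂ) / isqd d; 0, 1, 0; 0, 0, 1] := by
  have I_mul_div_sqrt (k : ℂ) : Complex.I * k / (Real.sqrt d : ℂ) = -k / isqd d := by
    linear_combination k * I_div_sqrt d
  obtain rfl | hm0 := eq_or_ne m 0
  · simp [gmat', shift, one_fin_three]
  · obtain ⟨k, rfl | rfl⟩ := m.even_or_odd'
    · simp [gmat', hm0, shift_two_mul, I_mul_div_sqrt]
    · have hk : (2 * k + 1) / 2 = k := by omega
      have hk2 : (2 * k + 1) % 2 = 1 := by omega
      simp only [gmat', hm, hm0, if_false, shift_two_mul_add_one, hk, hk2, one_ne_zero,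
        I_mul_div_sqrt, Int.cast_neg, Int.cast_natCast, neg_div, neg_neg]

variable [Fact (d % 4 = 3)]

lemma gmat'_mem_gammaSd (m : ℕ) : gmat' d m ∈ GammaSd d := by
  have hs := isqd_ne_zero d
  have hs_star : (starRingEnd ℂ) (isqd d) = -isqd d := star_isqd d
  rw [mem_gammaSd_iff, inU21_iff]
  obtain rfl | hm := eq_or_ne m 1
  · rw [gmat'_one]
    constructor
    · ext i j
      rw [conjTranspose_mul_matJ_mul_apply]
      fin_cases i <;> fin_cases j <;> simp [matJ, hs_star, mul_div_cancel₀, hs]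
    · simp [Fin.forall_fin_succ, sisterWeight, hs]
  · rw [gmat'_of_ne_one hm]
    constructor
    · ext i j
      rw [conjTranspose_mul_matJ_mul_apply]
      fin_cases i <;> fin_cases j <;> simp [matJ, hs_star, div_neg]
    · simp [Fin.forall_fin_succ, sisterWeight, hs]

lemma isqd_mul_apply_mem_of_mem_gammaSd (hM : M ∈ GammaSd d) :
    isqd d * M 0 2 ∈ integerRing d := hM.2.2.2.2.2.2.1

lemma apply_two_two_mem_of_mem_gammaSd (hM : M ∈ GammaSd d) : M 2 2 ∈ integerRing d :=
  hM.2.2.2.2.2.1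

lemma mem_coset_iff (m : ℕ) :
    M ∈ (gmat' d m * ·) '' Hd d ↔
      M ∈ GammaSd d ∧ cosetForm d m (residue d (isqd d * M 0 2)) (residue d (M 2 2)) = 0 := by
  have hs := isqd_ne_zero d
  have hs_star : (starRingEnd ℂ) (isqd d) = -isqd d := star_isqd d
  rw [mem_image_mul_Hd_iff (gmat'_mem_gammaSd m), conjTranspose_mul_matJ_mul_apply]
  refine and_congr_right fun hM => ?_
  have h02 := isqd_mul_apply_mem_of_mem_gammaSd hM
  have h22 := apply_two_two_mem_of_mem_gammaSd hM
  obtain rfl | hm := eq_or_ne m 1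
  · rw [cosetForm, if_pos rfl, residue_eq_zero_iff h22, gmat'_one]
    simp [hs_star, div_eq_inv_mul]
  · have hshift := intCast_mem (integerRing d) (shift m)
    have hmul := mul_mem hshift h22
    rw [cosetForm, if_neg hm, ← residue_intCast, ← residue_mul hshift h22, ← residue_add h02 hmul,
      residue_eq_zero_iff (add_mem h02 hmul), add_div, mul_div_cancel_left₀ _ hs,
      gmat'_of_ne_one hm]
    simp [hs_star, neg_div_neg_eq, div_mul_eq_mul_div]

lemma residue_last_column_ne_zero (hM : M ∈ GammaSd d) :
    ¬(residue d (isqd d * M 0 2) = 0 ∧ residue d (M 2 2) = 0) := by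
  rw [residue_eq_zero_iff (isqd_mul_apply_mem_of_mem_gammaSd hM),
    residue_eq_zero_iff (apply_two_two_mem_of_mem_gammaSd hM),
    mul_div_cancel_left₀ _ (isqd_ne_zero d)]
  rintro ⟨h02, h22⟩
  have hentry (i j) := (mem_gammaSd_iff.mp hM).2 i j
  have hstar10 : star (M 1 0) / isqd d ∈ integerRing d := by
    simpa [sisterWeight] using star_div_isqd_zpow_mem_integerRing (hentry 1 0)
  have hstar20 : star (M 2 0) / isqd d ∈ integerRing d := by
    simpa [sisterWeight] using star_div_isqd_zpow_mem_integerRing (hentry 2 0)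
  have hstar00 : star (M 0 0) ∈ integerRing d :=
    star_mem_integerRing (by simpa [sisterWeight] using hentry 0 0)
  have h12 : M 1 2 ∈ integerRing d := by simpa [sisterWeight] using hentry 1 2
  have form_entry : star (M 2 0) * M 0 2 + star (M 1 0) * M 1 2 + star (M 0 0) * M 2 2 = 1 := by
    rw [← conjTranspose_mul_matJ_mul_apply, hM.1.2]
    rfl
  have isqd_dvd_one : 1 / isqd d ∈ integerRing d := by
    rw [← form_entry, add_div, add_div, mul_div_right_comm, mul_div_right_comm, mul_div_assoc]
    exact add_mem (add_mem (mul_mem hstar20 h02) (mul_mem hstar10 h12)) (mul_mem hstar00 h22)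
  have residue_one : residue d 1 = 1 := by exact_mod_cast residue_intCast (d := d) 1
  rw [← residue_eq_zero_iff (one_mem _), residue_one] at isqd_dvd_one
  have : Fact (1 < d) := ⟨by have : d % 4 = 3 := Fact.out; omega⟩
  exact one_ne_zero isqd_dvd_one

lemma existsUnique_mem_coset [Fact d.Prime] (hM : M ∈ GammaSd d) :
    ∃! m, m < d + 1 ∧ M ∈ (gmat' d m * ·) '' Hd d := by
  have hd : d % 4 = 3 := Fact.out
  simp only [mem_coset_iff, hM, true_and]
  exact existsUnique_cosetForm_eq_zero (Nat.odd_iff.mpr (by omega)) (residue_last_column_ne_zero hM)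

end Cosets

theorem gammaSd_coset_decomposition_general {d : ℕ} (hp : d.Prime) (hd : d % 4 = 3) :
    (GammaSd d = ⋃ m ∈ Finset.range (d + 1), (gmat' d m * ·) '' Hd d) ∧
    (∀ m ∈ Finset.range (d + 1), ∀ n ∈ Finset.range (d + 1), m ≠ n →
      Disjoint ((gmat' d m * ·) '' Hd d) ((gmat' d n * ·) '' Hd d)) := by
  have : Fact d.Prime := ⟨hp⟩
  have : Fact (d % 4 = 3) := ⟨hd⟩
  simp only [Finset.mem_range]
  constructor
  · ext M
    simp only [Set.mem_iUnion, exists_prop]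
    exact ⟨fun hM => (existsUnique_mem_coset hM).exists,
      fun ⟨m, _, hM⟩ => ((mem_coset_iff m).mp hM).1⟩
  · intro m hm n hn hmn
    refine Set.disjoint_left.mpr fun M hMm hMn => hmn ?_
    exact (existsUnique_mem_coset ((mem_coset_iff m).mp hMm).1).unique ⟨hm, hMm⟩ ⟨hn, hMn⟩

/-- For `d ∈ {7,11}`, `Γ_s^(d)` is the disjoint union of the `d+1` left cosets
`g'_m H^(d)`, `m = 0, 1, …, d`. -/
theorem gammaSd_coset_decomposition :
    ∀ d ∈ ({7, 11} : Set ℕ),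
      (GammaSd d = ⋃ m ∈ Finset.range (d + 1), (gmat' d m * ·) '' Hd d) ∧
      (∀ m ∈ Finset.range (d + 1), ∀ n ∈ Finset.range (d + 1), m ≠ n →
        Disjoint ((gmat' d m * ·) '' Hd d) ((gmat' d n * ·) '' Hd d)) := by
  rintro d (rfl | rfl) <;> exact gammaSd_coset_decomposition_general (by norm_num) (by norm_num)
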